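/- arXiv:2111.07251 — 3 statements merged into one kernel-verified Lean document; each statement's English description precedes it below -/
import Mathlib

section
/- Let U, V : ℂ×ℝ → ℂ be smooth and solve the DSII equation. Let ψ₁, ψ₂ satisfy the Dirac equation with potential U, let φ₁, φ₂ satisfy the conjugate Dirac equation with potential U, and let all of them satisfy the DSII evolution equations. Let S : ℂ×ℝ → M₂(ℂ) be smooth, quaternion-type, invertible at every point, and satisfy S_z = M, S_z̄ = N, S_t = Q. Define K = Ψ S⁻¹ Γ Φᵀ Γ⁻¹, W = i·K₂₂ and a = K₁₂. Then the functions Ũ = U + W and Ṽ = V + 2i·a_z also solve the DSII equation, i.e. Ũ_t = i(Ũ_zz + Ũ_z̄z̄ + (Ṽ + conj(Ṽ))Ũ) and Ṽ_z̄ = 2(|Ũ|²)_z hold at every point of ℂ×ℝ. (Moutard transformation for the Davey–Stewartson II equation.) -/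
/-! The matrix `Γ Φᵀ Γ⁻¹` is the adjugate of `Φ`. With `r₁, r₂` the rows of `Ψ`, `c₁, c₂` the columns of
this adjugate, and `T = S⁻¹`, the entries of `K` are the scalars `Kᵢⱼ = rᵢ T cⱼ`. In this notation
the data become
`S_z = i c₂ r₁`, `S_z̄ = i c₁ r₂`, `S_t = c₂ ∂_z r₁ - (∂_z c₂) r₁ + (∂_z̄ c₁) r₂ - c₁ ∂_z̄ r₂`,
and the Dirac equations become `∂_z r₂ = -U r₁`, `∂_z̄ r₁ = Ū r₂`, `∂_z c₁ = Ū c₂`, `∂_z̄ c₂ = -U c₁`.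

Because `S_z` and `S_z̄` have rank one, the rule `D(S⁻¹) = -S⁻¹ (D S) S⁻¹` yields
`∂_z (r T c) = (∂_z r) T c + r T (∂_z c) - i (r T c₂)(r₁ T c)`, and similarly for `∂_z̄`
(`derivation_pairing_rank_one`). Two consequences carry the theorem.

* `dbar_K12`: `∂_z̄ K₁₂ = Ū K₂₂ - U K₁₁ - i K₁₁ K₂₂`. Since `K` is of quaternion type
  (`Kmat_quaternion`), `K₁₁` is the conjugate of `K₂₂`, so with `W = i K₂₂` this says
  `i ∂_z̄ K₁₂ = |U + W|² - |U|²`. Applying `2 ∂_z` and commuting `∂_z` with `∂_z̄` gives the second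
  DSII equation.
* `dt_K22`: expanding `∂_t`, `∂_z²` and `∂_z̄²` of `K₂₂` gives the first DSII equation for `U + W`
  minus the one for `U`, because the conjugate of `2i ∂_z K₁₂` is `2i ∂_z̄ K₂₁`.

Both identities are proved in an arbitrary commutative `ℂ`-algebra with derivations, and then applied
to the algebra `Smooth` of smooth functions on `ℂ × ℝ`.
-/

open Complex ComplexConjugate Matrix

noncomputable section

/-- Wirtinger derivative ∂_z for a function of (z,t) ∈ ℂ×ℝ. -/
def dz (g : ℂ × ℝ → ℂ) (p : ℂ × ℝ) : ℂ :=
  (2 : ℂ)⁻¹ * (fderiv ℝ g p (1, 0) - Complex.I * fderiv ℝ g p (Complex.I, 0))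

/-- Wirtinger derivative ∂_z̄ for a function of (z,t) ∈ ℂ×ℝ. -/
def dzb (g : ℂ × ℝ → ℂ) (p : ℂ × ℝ) : ℂ :=
  (2 : ℂ)⁻¹ * (fderiv ℝ g p (1, 0) + Complex.I * fderiv ℝ g p (Complex.I, 0))

/-- Time derivative ∂_t for a function of (z,t) ∈ ℂ×ℝ. -/
def dt (g : ℂ × ℝ → ℂ) (p : ℂ × ℝ) : ℂ :=
  fderiv ℝ g p (0, 1)

/-- Entrywise ∂_z of a matrix-valued function. -/
def mdz (F : ℂ × ℝ → Matrix (Fin 2) (Fin 2) ℂ) (p : ℂ × ℝ) : Matrix (Fin 2) (Fin 2) ℂ :=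
  Matrix.of fun i j => dz (fun q => F q i j) p

/-- Entrywise ∂_z̄ of a matrix-valued function. -/
def mdzb (F : ℂ × ℝ → Matrix (Fin 2) (Fin 2) ℂ) (p : ℂ × ℝ) : Matrix (Fin 2) (Fin 2) ℂ :=
  Matrix.of fun i j => dzb (fun q => F q i j) p

/-- Entrywise ∂_t of a matrix-valued function. -/
def mdt (F : ℂ × ℝ → Matrix (Fin 2) (Fin 2) ℂ) (p : ℂ × ℝ) : Matrix (Fin 2) (Fin 2) ℂ :=
  Matrix.of fun i j => dt (fun q => F q i j) p

/-- The pair (U,V) solves the Davey–Stewartson II equation. -/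
def DSII (U V : ℂ × ℝ → ℂ) : Prop :=
  (∀ p, dt U p = Complex.I *
      (dz (dz U) p + dzb (dzb U) p + (V p + conj (V p)) * U p)) ∧
  (∀ p, dzb V p = 2 * dz (fun q => U q * conj (U q)) p)

/-- (ψ₁,ψ₂) satisfies the Dirac equation with potential U. -/
def Dirac (U ψ₁ ψ₂ : ℂ × ℝ → ℂ) : Prop :=
  ∀ p, dz ψ₂ p = -(U p) * ψ₁ p ∧ dzb ψ₁ p = conj (U p) * ψ₂ p

/-- (φ₁,φ₂) satisfies the conjugate Dirac equation with potential U. -/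
def DiracV (U φ₁ φ₂ : ℂ × ℝ → ℂ) : Prop :=
  ∀ p, dz φ₂ p = -(conj (U p)) * φ₁ p ∧ dzb φ₁ p = U p * φ₂ p

/-- The DSII evolution equations for the spinor (ψ₁,ψ₂). -/
def EvolPsi (U V ψ₁ ψ₂ : ℂ × ℝ → ℂ) : Prop :=
  (∀ p, dt ψ₁ p = Complex.I *
      (-(dz (dz ψ₁) p) - V p * ψ₁ p + conj (U p) * dzb ψ₂ p
        - dzb (fun q => conj (U q)) p * ψ₂ p)) ∧
  (∀ p, dt ψ₂ p = Complex.I *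
      (U p * dz ψ₁ p - dz U p * ψ₁ p + dzb (dzb ψ₂) p + conj (V p) * ψ₂ p))

/-- The DSII evolution equations for the spinor (φ₁,φ₂). -/
def EvolPhi (U V φ₁ φ₂ : ℂ × ℝ → ℂ) : Prop :=
  (∀ p, dt φ₁ p = -Complex.I *
      (-(dz (dz φ₁) p) - V p * φ₁ p + U p * dzb φ₂ p - dzb U p * φ₂ p)) ∧
  (∀ p, dt φ₂ p = -Complex.I *
      (conj (U p) * dz φ₁ p - dz (fun q => conj (U q)) p * φ₁ p
        + dzb (dzb φ₂) p + conj (V p) * φ₂ p))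

/-- The quaternion-type matrix built from a spinor. -/
def spinMat (ψ₁ ψ₂ : ℂ × ℝ → ℂ) (p : ℂ × ℝ) : Matrix (Fin 2) (Fin 2) ℂ :=
  !![ψ₁ p, -conj (ψ₂ p); ψ₂ p, conj (ψ₁ p)]

def Gam : Matrix (Fin 2) (Fin 2) ℂ := !![0, 1; -1, 0]

/-- The matrix M (the dz-component of the closed 1-form). -/
def Mform (ψ₁ ψ₂ φ₁ φ₂ : ℂ × ℝ → ℂ) (p : ℂ × ℝ) : Matrix (Fin 2) (Fin 2) ℂ :=
  Complex.I • !![ψ₁ p * conj (φ₂ p), -conj (ψ₂ p) * conj (φ₂ p);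
                 ψ₁ p * φ₁ p, -conj (ψ₂ p) * φ₁ p]

/-- The matrix N (the dz̄-component of the closed 1-form). -/
def Nform (ψ₁ ψ₂ φ₁ φ₂ : ℂ × ℝ → ℂ) (p : ℂ × ℝ) : Matrix (Fin 2) (Fin 2) ℂ :=
  Complex.I • !![ψ₂ p * conj (φ₁ p), conj (ψ₁ p) * conj (φ₁ p);
                 -(ψ₂ p * φ₂ p), -conj (ψ₁ p) * φ₂ p]

/-- The matrix Q (the dt-component of the closed 1-form). -/
def Qform (ψ₁ ψ₂ φ₁ φ₂ : ℂ × ℝ → ℂ) (p : ℂ × ℝ) : Matrix (Fin 2) (Fin 2) ℂ :=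
  !![dz ψ₁ p * conj (φ₂ p) - ψ₁ p * dz (fun q => conj (φ₂ q)) p
       + ψ₂ p * dzb (fun q => conj (φ₁ q)) p - dzb ψ₂ p * conj (φ₁ p),
     conj (ψ₁ p) * dzb (fun q => conj (φ₁ q)) p - dzb (fun q => conj (ψ₁ q)) p * conj (φ₁ p)
       + conj (ψ₂ p) * dz (fun q => conj (φ₂ q)) p - dz (fun q => conj (ψ₂ q)) p * conj (φ₂ p);
     dz ψ₁ p * φ₁ p - ψ₁ p * dz φ₁ p + dzb ψ₂ p * φ₂ p - ψ₂ p * dzb φ₂ p,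
     conj (ψ₂ p) * dz φ₁ p - dz (fun q => conj (ψ₂ q)) p * φ₁ p
       + dzb (fun q => conj (ψ₁ q)) p * φ₂ p - conj (ψ₁ p) * dzb φ₂ p]

/-- K = Ψ S⁻¹ Γ Φᵀ Γ⁻¹. -/
def Kmat (ψ₁ ψ₂ φ₁ φ₂ : ℂ × ℝ → ℂ) (S : ℂ × ℝ → Matrix (Fin 2) (Fin 2) ℂ)
    (p : ℂ × ℝ) : Matrix (Fin 2) (Fin 2) ℂ :=
  spinMat ψ₁ ψ₂ p * (S p)⁻¹ * Gam * (spinMat φ₁ φ₂ p)ᵀ * Gam⁻¹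

/-! ### Algebra of the pairing `r S⁻¹ c` -/

/-- The bilinear pairing `r T c` of a row `r` with a column `c`. -/
def pairing {R : Type*} [CommRing R] (T : Matrix (Fin 2) (Fin 2) R) (r c : Fin 2 → R) : R :=
  r ⬝ᵥ (T *ᵥ c)

lemma pairing_smul_left {R : Type*} [CommRing R] (T : Matrix (Fin 2) (Fin 2) R) (u : R)
    (r c : Fin 2 → R) :
    pairing T (fun k => u * r k) c = u * pairing T r c := by
  simp only [pairing, Matrix.mulVec, dotProduct, Fin.sum_univ_two]; ring

lemma pairing_smul_right {R : Type*} [CommRing R] (T : Matrix (Fin 2) (Fin 2) R) (u : R)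
    (r c : Fin 2 → R) :
    pairing T r (fun k => u * c k) = u * pairing T r c := by
  simp only [pairing, Matrix.mulVec, dotProduct, Fin.sum_univ_two]; ring

section Algebra

variable {R : Type*} [CommRing R] [Algebra ℂ R]

/-- The rule `D(S⁻¹) = -S⁻¹ (D S) S⁻¹`, for a derivation acting entrywise. -/
lemma derivation_inverse (D : Derivation ℂ R R) (T S : Matrix (Fin 2) (Fin 2) R)
    (hTS : T * S = 1) : T.map D = -(T * S.map D * T) := by
  have hST : S * T = 1 := mul_eq_one_comm.mp hTS
  have h : T.map D * S + T * S.map D = 0 := by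
    ext i j
    have h1 : D ((T * S) i j) = 0 := by
      rw [hTS, Matrix.one_apply]; split_ifs <;> simp
    rw [Matrix.mul_apply] at h1
    simp only [Fin.sum_univ_two, map_add, Derivation.leibniz, smul_eq_mul] at h1
    simp only [Matrix.add_apply, Matrix.mul_apply, Fin.sum_univ_two, Matrix.map_apply,
      Matrix.zero_apply]
    linear_combination h1
  calc T.map D = T.map D * (S * T) := by rw [hST, mul_one]
    _ = (T.map D * S + T * S.map D) * T - T * S.map D * T := by noncomm_ring
    _ = _ := by rw [h]; simp

lemma derivation_pairing (D : Derivation ℂ R R) (T S : Matrix (Fin 2) (Fin 2) R)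
    (hTS : T * S = 1) (r c : Fin 2 → R) :
    D (pairing T r c) = pairing T (fun k => D (r k)) c + pairing T r (fun k => D (c k))
      - pairing (T * S.map D * T) r c := by
  have h : ∀ i j, D (T i j) = -(T * S.map D * T) i j := fun i j => by
    rw [← Matrix.neg_apply, ← derivation_inverse D T S hTS, Matrix.map_apply]
  generalize T * S.map D * T = X at h ⊢
  simp only [pairing, Matrix.mulVec, dotProduct, Fin.sum_univ_two, map_add, Derivation.leibniz,
    smul_eq_mul, h]
  ring

/-- If `D S = J a b` has rank one, the correction term in the Leibniz rule for the pairing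
factors. -/
lemma derivation_pairing_rank_one (D : Derivation ℂ R R) (T S : Matrix (Fin 2) (Fin 2) R)
    (hTS : T * S = 1) (J : R) (a b : Fin 2 → R) (hD : ∀ k l, D (S k l) = J * (a k * b l))
    (r c : Fin 2 → R) :
    D (pairing T r c) = pairing T (fun k => D (r k)) c + pairing T r (fun k => D (c k))
      - J * pairing T r a * pairing T b c := by
  rw [derivation_pairing D T S hTS]
  congr 1
  simp only [pairing, Matrix.mulVec, dotProduct, Matrix.mul_apply, Fin.sum_univ_two,
    Matrix.map_apply, hD]
  ring

/-- The equation for `∂_z̄ K₁₂`, which encodes `|U + W|² - |U|²`. -/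
lemma dbar_K12 (Db : Derivation ℂ R R) (T S : Matrix (Fin 2) (Fin 2) R)
    (hTS : T * S = 1) (J U Ub : R) (r₁ r₂ c₁ c₂ : Fin 2 → R)
    (hSb : ∀ k l, Db (S k l) = J * (c₁ k * r₂ l))
    (hr₁ : ∀ k, Db (r₁ k) = Ub * r₂ k) (hc₂ : ∀ k, Db (c₂ k) = -U * c₁ k) :
    Db (pairing T r₁ c₂) = Ub * pairing T r₂ c₂ - U * pairing T r₁ c₁
      - J * pairing T r₁ c₁ * pairing T r₂ c₂ := by
  rw [derivation_pairing_rank_one Db T S hTS J c₁ r₂ hSb]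
  simp only [hr₁, hc₂, pairing_smul_left, pairing_smul_right]
  ring

/-- The evolution equation of `K₂₂`: writing `W = J K₂₂` with `J² = -1`, it is the difference of
the first DSII equations for `U + W` and for `U`. -/
lemma dt_K22 (D Db Dt : Derivation ℂ R R) (T S : Matrix (Fin 2) (Fin 2) R)
    (hTS : T * S = 1) (J U V Vb : R) (hJ : J * J = -1)
    (hDJ : D J = 0) (hDbJ : Db J = 0) (r₁ r₂ c₁ c₂ : Fin 2 → R)
    (hSz : ∀ k l, D (S k l) = J * (c₂ k * r₁ l))
    (hSb : ∀ k l, Db (S k l) = J * (c₁ k * r₂ l))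
    (hSt : ∀ k l, Dt (S k l) = c₂ k * D (r₁ l) - D (c₂ k) * r₁ l
      + Db (c₁ k) * r₂ l - c₁ k * Db (r₂ l))
    (hr₂ : ∀ k, D (r₂ k) = -U * r₁ k) (hc₂ : ∀ k, Db (c₂ k) = -U * c₁ k)
    (hr₂t : ∀ k, Dt (r₂ k) = J * (U * D (r₁ k) - D U * r₁ k + Db (Db (r₂ k)) + Vb * r₂ k))
    (hc₂t : ∀ k, Dt (c₂ k) = J * (D (D (c₂ k)) + V * c₂ k + U * Db (c₁ k) - Db U * c₁ k)) :
    Dt (pairing T r₂ c₂) = J * (D (D (pairing T r₂ c₂)) + Db (Db (pairing T r₂ c₂))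
      + (V + Vb) * pairing T r₂ c₂
      + (2 * J * D (pairing T r₁ c₂) + 2 * J * Db (pairing T r₂ c₁))
        * (-J * U + pairing T r₂ c₂)) := by
  have Lz := derivation_pairing_rank_one D T S hTS J c₂ r₁ hSz
  have Lb := derivation_pairing_rank_one Db T S hTS J c₁ r₂ hSb
  have ht1 : pairing T (fun k => Dt (r₂ k)) c₂ =
      J * (U * pairing T (fun k => D (r₁ k)) c₂ - D U * pairing T r₁ c₂
        + pairing T (fun k => Db (Db (r₂ k))) c₂ + Vb * pairing T r₂ c₂) := by
    simp only [hr₂t, pairing, Matrix.mulVec, dotProduct, Fin.sum_univ_two]; ring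
  have ht2 : pairing T r₂ (fun k => Dt (c₂ k)) =
      J * (pairing T r₂ (fun k => D (D (c₂ k))) + V * pairing T r₂ c₂
        + U * pairing T r₂ (fun k => Db (c₁ k)) - Db U * pairing T r₂ c₁) := by
    simp only [hc₂t, pairing, Matrix.mulVec, dotProduct, Fin.sum_univ_two]; ring
  have ht3 : pairing (T * S.map Dt * T) r₂ c₂ =
      pairing T r₂ c₂ * pairing T (fun k => D (r₁ k)) c₂
      - pairing T r₂ (fun k => D (c₂ k)) * pairing T r₁ c₂
      + pairing T r₂ (fun k => Db (c₁ k)) * pairing T r₂ c₂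
      - pairing T r₂ c₁ * pairing T (fun k => Db (r₂ k)) c₂ := by
    simp only [pairing, Matrix.mulVec, dotProduct, Matrix.mul_apply, Fin.sum_univ_two,
      Matrix.map_apply, hSt]
    ring
  have z12 := Lz r₁ c₂
  have b21 := Lb r₂ c₁
  have z22 := Lz r₂ c₂
  have b22 := Lb r₂ c₂
  simp only [hr₂, pairing_smul_left] at z22
  simp only [hc₂, pairing_smul_right] at b22
  have zz : D (D (pairing T r₂ c₂)) = _ := congrArg D z22
  have bb : Db (Db (pairing T r₂ c₂)) = _ := congrArg Db b22
  simp only [map_add, map_sub, map_neg, Derivation.leibniz, smul_eq_mul, hDJ, hDbJ] at zz bb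
  -- The second-order terms `∂_z (r₂ T ∂_z c₂)` and `∂_z̄ (∂_z̄ r₂ T c₂)`.
  have z2c := Lz r₂ (fun k => D (c₂ k))
  have br2 := Lb (fun k => Db (r₂ k)) c₂
  simp only [hr₂, pairing_smul_left] at z2c
  simp only [hc₂, pairing_smul_right] at br2
  rw [derivation_pairing Dt T S hTS, ht1, ht2, ht3, zz, bb, z2c, br2, z22, b22, z12, b21]
  generalize pairing T (fun k => D (r₁ k)) c₂ = α
  generalize pairing T r₁ (fun k => D (c₂ k)) = β
  generalize pairing T (fun k => Db (r₂ k)) c₁ = γ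
  generalize pairing T r₂ (fun k => Db (c₁ k)) = δ
  generalize pairing T r₂ (fun k => D (c₂ k)) = ε
  generalize pairing T (fun k => Db (r₂ k)) c₂ = ζ
  generalize pairing T r₁ c₂ = k12
  generalize pairing T r₂ c₁ = k21
  generalize pairing T r₂ c₂ = k22
  -- What remains is a polynomial identity in the pairings modulo `J² = -1`.
  have hJ3 : J ^ 3 = -J := by linear_combination J * hJ
  have hJ4 : J ^ 4 = 1 := by linear_combination (J ^ 2 - 1) * hJ
  have hJ2 : J ^ 2 = -1 := by linear_combination hJ
  ring_nf
  simp only [hJ2, hJ3, hJ4]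
  ring

end Algebra

/-! ### Smooth functions and the Wirtinger derivations -/

/-- The algebra of smooth complex-valued functions on `ℂ × ℝ`. -/
def Smooth : Subalgebra ℂ (ℂ × ℝ → ℂ) where
  carrier := {f | ContDiff ℝ (⊤ : ℕ∞) f}
  mul_mem' := fun ha hb => by rw [Set.mem_ofPred_eq] at *; exact ha.mul hb
  add_mem' := fun ha hb => by rw [Set.mem_ofPred_eq] at *; exact ha.add hb
  algebraMap_mem' := fun c => by rw [Set.mem_ofPred_eq, Pi.algebraMap_def]; exact contDiff_const

lemma Smooth.contDiff (f : Smooth) : ContDiff ℝ (⊤ : ℕ∞) f.1 := f.2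

lemma smooth_dir {f : ℂ × ℝ → ℂ} (hf : ContDiff ℝ (⊤ : ℕ∞) f) (v : ℂ × ℝ) :
    ContDiff ℝ (⊤ : ℕ∞) (fun p => fderiv ℝ f p v) :=
  (hf.fderiv_right (m := (⊤ : ℕ∞)) (by norm_cast)).clm_apply contDiff_const

lemma Smooth.differentiable (f : Smooth) : Differentiable ℝ f.1 :=
  (Smooth.contDiff f).differentiable (by simp)

/-- The directional derivative along `v`, as a derivation of the algebra of smooth functions. -/
def dirDer (v : ℂ × ℝ) : Derivation ℂ Smooth Smooth :=
  Derivation.mk'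
    { toFun := fun f => ⟨fun p => fderiv ℝ f.1 p v, smooth_dir (Smooth.contDiff f) v⟩
      map_add' := fun f g => by
        ext p
        change fderiv ℝ (f.1 + g.1) p v = _
        rw [fderiv_add (Smooth.differentiable f p) (Smooth.differentiable g p)]; rfl
      map_smul' := fun c f => by
        ext p
        change fderiv ℝ (c • (f : ℂ × ℝ → ℂ)) p v = _
        rw [fderiv_const_smul (Smooth.differentiable f p)]; rfl }
    (fun f g => by
      ext p
      change fderiv ℝ (f.1 * g.1) p v =
        f.1 p * fderiv ℝ g.1 p v + g.1 p * fderiv ℝ f.1 p v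
      rw [fderiv_mul (Smooth.differentiable f p) (Smooth.differentiable g p)]
      simp)

/-- `∂_z` as a derivation of the algebra of smooth functions. -/
def derZ : Derivation ℂ Smooth Smooth :=
  (2 : ℂ)⁻¹ • (dirDer (1, 0) - Complex.I • dirDer (Complex.I, 0))

/-- `∂_z̄` as a derivation of the algebra of smooth functions. -/
def derZb : Derivation ℂ Smooth Smooth :=
  (2 : ℂ)⁻¹ • (dirDer (1, 0) + Complex.I • dirDer (Complex.I, 0))

/-- `∂_t` as a derivation of the algebra of smooth functions. -/
def derT : Derivation ℂ Smooth Smooth := dirDer (0, 1)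

lemma dirDer_comm (v w : ℂ × ℝ) (f : Smooth) :
    dirDer v (dirDer w f) = dirDer w (dirDer v f) := by
  ext p
  have hf : ContDiff ℝ (⊤ : ℕ∞) (f : ℂ × ℝ → ℂ) := f.2
  have hd : DifferentiableAt ℝ (fderiv ℝ (f : ℂ × ℝ → ℂ)) p :=
    ((hf.fderiv_right (m := (⊤ : ℕ∞)) (by norm_cast)).differentiable (by simp)) p
  have key : ∀ v w : ℂ × ℝ, fderiv ℝ (fun q => fderiv ℝ (f : ℂ × ℝ → ℂ) q w) p v =
      fderiv ℝ (fderiv ℝ (f : ℂ × ℝ → ℂ)) p v w := fun v w => by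
    rw [fderiv_clm_apply hd (differentiableAt_const w)]; simp
  have hs : IsSymmSndFDerivAt ℝ (f : ℂ × ℝ → ℂ) p :=
    hf.contDiffAt.isSymmSndFDerivAt (by
      simp only [minSmoothness_of_isRCLikeNormedField]; exact WithTop.coe_le_coe.mpr le_top)
  change fderiv ℝ (fun q => fderiv ℝ (f : ℂ × ℝ → ℂ) q w) p v =
    fderiv ℝ (fun q => fderiv ℝ (f : ℂ × ℝ → ℂ) q v) p w
  rw [key, key, hs v w]

lemma derZ_derZb_comm (f : Smooth) : derZb (derZ f) = derZ (derZb f) := by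
  simp only [derZ, derZb, Derivation.smul_apply, Derivation.add_apply, Derivation.sub_apply,
    map_add, map_sub, Derivation.map_smul, dirDer_comm (Complex.I, 0) (1, 0) f]
  module

/-- Pointwise complex conjugation of smooth functions. -/
def cj (f : Smooth) : Smooth :=
  ⟨fun p => conj (f.1 p), Complex.conjCLE.contDiff.comp (Smooth.contDiff f)⟩

lemma fderiv_conj (f : Smooth) (p v : ℂ × ℝ) :
    fderiv ℝ (fun q => conj (f.1 q)) p v = conj (fderiv ℝ f.1 p v) := by
  have h := (Complex.conjCLE.toContinuousLinearMap.hasFDerivAt.comp p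
    (Smooth.differentiable f p).hasFDerivAt).fderiv
  exact congrArg (fun L => L v) h

lemma derZ_cj (f : Smooth) : derZ (cj f) = cj (derZb f) := by
  ext p
  change (2 : ℂ)⁻¹ * (fderiv ℝ (fun q => conj (f.1 q)) p _ - Complex.I *
    fderiv ℝ (fun q => conj (f.1 q)) p _) = conj ((2 : ℂ)⁻¹ *
      (fderiv ℝ f.1 p (1, 0) + Complex.I * fderiv ℝ f.1 p (Complex.I, 0)))
  rw [fderiv_conj, fderiv_conj]
  simp [sub_eq_add_neg, Complex.conj_ofNat]

lemma derZb_cj (f : Smooth) : derZb (cj f) = cj (derZ f) := by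
  ext p
  change (2 : ℂ)⁻¹ * (fderiv ℝ (fun q => conj (f.1 q)) p _ + Complex.I *
    fderiv ℝ (fun q => conj (f.1 q)) p _) = conj ((2 : ℂ)⁻¹ *
      (fderiv ℝ f.1 p (1, 0) - Complex.I * fderiv ℝ f.1 p (Complex.I, 0)))
  rw [fderiv_conj, fderiv_conj]
  simp [Complex.conj_ofNat]

lemma derT_cj (f : Smooth) : derT (cj f) = cj (derT f) := by
  ext p
  exact fderiv_conj f p _

@[simp] lemma cj_cj (f : Smooth) : cj (cj f) = f := by ext p; exact Complex.conj_conj _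
@[simp] lemma cj_mul (f g : Smooth) : cj (f * g) = cj f * cj g := by
  ext p; exact map_mul (starRingEnd ℂ) _ _
@[simp] lemma cj_add (f g : Smooth) : cj (f + g) = cj f + cj g := by
  ext p; exact map_add (starRingEnd ℂ) _ _
@[simp] lemma cj_sub (f g : Smooth) : cj (f - g) = cj f - cj g := by
  ext p; exact map_sub (starRingEnd ℂ) _ _
@[simp] lemma cj_neg (f : Smooth) : cj (-f) = -cj f := by
  ext p; exact map_neg (starRingEnd ℂ) _

/-- The constant function `i`. -/
def JJ : Smooth := algebraMap ℂ Smooth Complex.I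

lemma JJ_mul_JJ : JJ * JJ = -1 := by
  rw [JJ, ← map_mul, Complex.I_mul_I, map_neg, map_one]

@[simp] lemma cj_JJ : cj JJ = -JJ := by
  ext p; exact Complex.conj_I

/-! ### The inverse of a smooth matrix -/

lemma smooth_inverse {S : ℂ × ℝ → Matrix (Fin 2) (Fin 2) ℂ}
    (hS : ∀ i j, ContDiff ℝ (⊤ : ℕ∞) (fun q => S q i j)) (hinv : ∀ p, IsUnit (S p))
    (i j : Fin 2) : ContDiff ℝ (⊤ : ℕ∞) (fun q => (S q)⁻¹ i j) := by
  have hdet : ∀ p, (S p).det ≠ 0 := fun p =>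
    ((Matrix.isUnit_iff_isUnit_det _).mp (hinv p)).ne_zero
  have hd : ContDiff ℝ (⊤ : ℕ∞) (fun q => ((S q).det)⁻¹) := by
    refine ContDiff.inv ?_ hdet
    simp only [Matrix.det_fin_two]
    exact ((hS _ _).mul (hS _ _)).sub ((hS _ _).mul (hS _ _))
  have ha : ContDiff ℝ (⊤ : ℕ∞) (fun q => (S q).adjugate i j) := by
    simp only [Matrix.adjugate_fin_two]
    fin_cases i <;> fin_cases j
    · exact hS 1 1
    · exact (hS 0 1).neg
    · exact (hS 1 0).neg
    · exact hS 0 0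
  simp only [Matrix.inv_def, Ring.inverse_eq_inv', Matrix.smul_apply, smul_eq_mul]
  exact hd.mul ha

/-- For quaternion-type `S`, the matrix `K` is again of quaternion type. -/
lemma Kmat_quaternion (ψ₁ ψ₂ φ₁ φ₂ : ℂ × ℝ → ℂ) (S : ℂ × ℝ → Matrix (Fin 2) (Fin 2) ℂ)
    (p : ℂ × ℝ) (h : S p 1 0 = -conj (S p 0 1) ∧ S p 1 1 = conj (S p 0 0)) :
    conj (Kmat ψ₁ ψ₂ φ₁ φ₂ S p 1 1) = Kmat ψ₁ ψ₂ φ₁ φ₂ S p 0 0 ∧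
    conj (Kmat ψ₁ ψ₂ φ₁ φ₂ S p 0 1) = -Kmat ψ₁ ψ₂ φ₁ φ₂ S p 1 0 := by
  obtain ⟨h10, h11⟩ := h
  simp only [Kmat, spinMat, Gam, Matrix.inv_def, Ring.inverse_eq_inv',
    Matrix.adjugate_fin_two, Matrix.det_fin_two, h10, h11]
  constructor <;>
  · simp [Matrix.mul_apply, Fin.sum_univ_two, Matrix.vecMul, dotProduct]
    ring

/-! ### The transformation theorem -/

/-- **The Moutard transformation for the Davey–Stewartson II equation.** -/
theorem moutard_transformation_DSII
    (U V ψ₁ ψ₂ φ₁ φ₂ : ℂ × ℝ → ℂ)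
    (hU : ContDiff ℝ (⊤ : ℕ∞) U) (hV : ContDiff ℝ (⊤ : ℕ∞) V)
    (hψ₁ : ContDiff ℝ (⊤ : ℕ∞) ψ₁) (hψ₂ : ContDiff ℝ (⊤ : ℕ∞) ψ₂)
    (hφ₁ : ContDiff ℝ (⊤ : ℕ∞) φ₁) (hφ₂ : ContDiff ℝ (⊤ : ℕ∞) φ₂)
    (hDSII : DSII U V)
    (hDirac : Dirac U ψ₁ ψ₂) (hDiracV : DiracV U φ₁ φ₂)
    (hEvolψ : EvolPsi U V ψ₁ ψ₂) (hEvolφ : EvolPhi U V φ₁ φ₂)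
    (S : ℂ × ℝ → Matrix (Fin 2) (Fin 2) ℂ)
    (hS : ∀ i j, ContDiff ℝ (⊤ : ℕ∞) (fun q => S q i j))
    (hquat : ∀ p, S p 1 0 = -conj (S p 0 1) ∧ S p 1 1 = conj (S p 0 0))
    (hinv : ∀ p, IsUnit (S p))
    (hSz : ∀ p, mdz S p = Mform ψ₁ ψ₂ φ₁ φ₂ p)
    (hSzb : ∀ p, mdzb S p = Nform ψ₁ ψ₂ φ₁ φ₂ p)
    (hSt : ∀ p, mdt S p = Qform ψ₁ ψ₂ φ₁ φ₂ p) :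
    DSII (fun p => U p + Complex.I * Kmat ψ₁ ψ₂ φ₁ φ₂ S p 1 1)
         (fun p => V p + 2 * Complex.I * dz (fun q => Kmat ψ₁ ψ₂ φ₁ φ₂ S q 0 1) p) := by
  obtain ⟨u, rfl⟩ : ∃ f : Smooth, (f : ℂ × ℝ → ℂ) = U := ⟨⟨U, hU⟩, rfl⟩
  obtain ⟨v, rfl⟩ : ∃ f : Smooth, (f : ℂ × ℝ → ℂ) = V := ⟨⟨V, hV⟩, rfl⟩
  obtain ⟨a₁, rfl⟩ : ∃ f : Smooth, (f : ℂ × ℝ → ℂ) = ψ₁ := ⟨⟨ψ₁, hψ₁⟩, rfl⟩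
  obtain ⟨a₂, rfl⟩ : ∃ f : Smooth, (f : ℂ × ℝ → ℂ) = ψ₂ := ⟨⟨ψ₂, hψ₂⟩, rfl⟩
  obtain ⟨b₁, rfl⟩ : ∃ f : Smooth, (f : ℂ × ℝ → ℂ) = φ₁ := ⟨⟨φ₁, hφ₁⟩, rfl⟩
  obtain ⟨b₂, rfl⟩ : ∃ f : Smooth, (f : ℂ × ℝ → ℂ) = φ₂ := ⟨⟨φ₂, hφ₂⟩, rfl⟩
  -- The hypotheses as identities in the algebra of smooth functions.
  have eu : derT u = JJ * (derZ (derZ u) + derZb (derZb u) + (v + cj v) * u) :=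
    Subtype.ext (funext hDSII.1)
  have ev : derZb v = 2 * derZ (u * cj u) := Subtype.ext (funext hDSII.2)
  have a₂z : derZ a₂ = -u * a₁ := Subtype.ext (funext fun p => (hDirac p).1)
  have a₁b : derZb a₁ = cj u * a₂ := Subtype.ext (funext fun p => (hDirac p).2)
  have b₂z : derZ b₂ = -cj u * b₁ := Subtype.ext (funext fun p => (hDiracV p).1)
  have b₁b : derZb b₁ = u * b₂ := Subtype.ext (funext fun p => (hDiracV p).2)
  have a₁t : derT a₁ = JJ * (-derZ (derZ a₁) - v * a₁ + cj u * derZb a₂ - derZb (cj u) * a₂) :=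
    Subtype.ext (funext hEvolψ.1)
  have a₂t : derT a₂ = JJ * (u * derZ a₁ - derZ u * a₁ + derZb (derZb a₂) + cj v * a₂) :=
    Subtype.ext (funext hEvolψ.2)
  have b₁t : derT b₁ = -JJ * (-derZ (derZ b₁) - v * b₁ + u * derZb b₂ - derZb u * b₂) :=
    Subtype.ext (funext hEvolφ.1)
  have b₂t : derT b₂ = -JJ * (cj u * derZ b₁ - derZ (cj u) * b₁ + derZb (derZb b₂) + cj v * b₂) :=
    Subtype.ext (funext hEvolφ.2)
  -- The rows of `Ψ` and the columns of `Γ Φᵀ Γ⁻¹`.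
  let r₁ : Fin 2 → Smooth := ![a₁, -cj a₂]
  let r₂ : Fin 2 → Smooth := ![a₂, cj a₁]
  let c₁ : Fin 2 → Smooth := ![cj b₁, -b₂]
  let c₂ : Fin 2 → Smooth := ![cj b₂, b₁]
  let σ : Matrix (Fin 2) (Fin 2) Smooth := Matrix.of fun i j => ⟨fun q => S q i j, hS i j⟩
  let T : Matrix (Fin 2) (Fin 2) Smooth :=
    Matrix.of fun i j => ⟨fun q => (S q)⁻¹ i j, smooth_inverse hS hinv i j⟩
  have hT : T * σ = 1 := by
    ext i j p
    have h := congrFun (congrFun (Matrix.nonsing_inv_mul (S p)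
      ((Matrix.isUnit_iff_isUnit_det _).mp (hinv p))) i) j
    rw [Matrix.mul_apply, Fin.sum_univ_two] at h ⊢
    refine Eq.trans h ?_
    fin_cases i <;> fin_cases j <;> rfl
  have hr₁b : ∀ k, derZb (r₁ k) = cj u * r₂ k := by
    intro k
    fin_cases k
    · exact a₁b
    · change derZb (-cj a₂) = cj u * cj a₁
      rw [map_neg, derZb_cj, a₂z]; simp only [cj_mul, cj_neg]; ring
  have hr₂z : ∀ k, derZ (r₂ k) = -u * r₁ k := by
    intro k
    fin_cases k
    · exact a₂z
    · change derZ (cj a₁) = -u * -cj a₂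
      rw [derZ_cj, a₁b]; simp only [cj_mul, cj_cj]; ring
  have hc₂b : ∀ k, derZb (c₂ k) = -u * c₁ k := by
    intro k
    fin_cases k
    · change derZb (cj b₂) = -u * cj b₁
      rw [derZb_cj, b₂z]; simp only [cj_mul, cj_neg, cj_cj]
    · change derZb b₁ = -u * -b₂
      rw [b₁b]; ring
  have hr₂t : ∀ k, derT (r₂ k) =
      JJ * (u * derZ (r₁ k) - derZ u * r₁ k + derZb (derZb (r₂ k)) + cj v * r₂ k) := by
    intro k
    fin_cases k
    · exact a₂t
    · change derT (cj a₁) = JJ * (u * derZ (-cj a₂) - derZ u * -cj a₂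
        + derZb (derZb (cj a₁)) + cj v * cj a₁)
      rw [derT_cj, a₁t]
      simp only [cj_mul, cj_add, cj_sub, cj_neg, cj_JJ, derZb_cj, derZ_cj, cj_cj, map_neg]
      ring
  have hc₂t : ∀ k, derT (c₂ k) =
      JJ * (derZ (derZ (c₂ k)) + v * c₂ k + u * derZb (c₁ k) - derZb u * c₁ k) := by
    intro k
    fin_cases k
    · change derT (cj b₂) = JJ * (derZ (derZ (cj b₂)) + v * cj b₂ + u * derZb (cj b₁)
        - derZb u * cj b₁)
      rw [derT_cj, b₂t]
      simp only [cj_mul, cj_add, cj_sub, cj_neg, cj_JJ, derZb_cj, derZ_cj, cj_cj]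
      ring
    · change derT b₁ = JJ * (derZ (derZ b₁) + v * b₁ + u * derZb (-b₂) - derZb u * -b₂)
      rw [b₁t, map_neg]
      ring
  have hσz : ∀ k l, derZ (σ k l) = JJ * (c₂ k * r₁ l) := by
    intro k l
    ext p
    have h := congrFun (congrFun (hSz p) k) l
    refine Eq.trans h ?_
    change _ = Complex.I * ((c₂ k).1 p * (r₁ l).1 p)
    fin_cases k <;> fin_cases l <;> simp [Mform, c₂, r₁, cj] <;> ring
  have hσb : ∀ k l, derZb (σ k l) = JJ * (c₁ k * r₂ l) := by
    intro k l
    ext p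
    have h := congrFun (congrFun (hSzb p) k) l
    refine Eq.trans h ?_
    change _ = Complex.I * ((c₁ k).1 p * (r₂ l).1 p)
    fin_cases k <;> fin_cases l <;> simp [Nform, c₁, r₂, cj] <;> ring
  have hσt : ∀ k l, derT (σ k l) = c₂ k * derZ (r₁ l) - derZ (c₂ k) * r₁ l
      + derZb (c₁ k) * r₂ l - c₁ k * derZb (r₂ l) := by
    have q00 : derT (σ 0 0) = derZ a₁ * cj b₂ - a₁ * derZ (cj b₂)
        + a₂ * derZb (cj b₁) - derZb a₂ * cj b₁ :=
      Subtype.ext (funext fun p => congrFun (congrFun (hSt p) 0) 0)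
    have q01 : derT (σ 0 1) = cj a₁ * derZb (cj b₁) - derZb (cj a₁) * cj b₁
        + cj a₂ * derZ (cj b₂) - derZ (cj a₂) * cj b₂ :=
      Subtype.ext (funext fun p => congrFun (congrFun (hSt p) 0) 1)
    have q10 : derT (σ 1 0) = derZ a₁ * b₁ - a₁ * derZ b₁ + derZb a₂ * b₂ - a₂ * derZb b₂ :=
      Subtype.ext (funext fun p => congrFun (congrFun (hSt p) 1) 0)
    have q11 : derT (σ 1 1) = cj a₂ * derZ b₁ - derZ (cj a₂) * b₁
        + derZb (cj a₁) * b₂ - cj a₁ * derZb b₂ :=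
      Subtype.ext (funext fun p => congrFun (congrFun (hSt p) 1) 1)
    intro k l
    fin_cases k <;> fin_cases l
    · refine q00.trans ?_
      change _ = cj b₂ * derZ a₁ - derZ (cj b₂) * a₁ + derZb (cj b₁) * a₂ - cj b₁ * derZb a₂
      ring
    · refine q01.trans ?_
      change _ = cj b₂ * derZ (-cj a₂) - derZ (cj b₂) * -cj a₂ + derZb (cj b₁) * cj a₁
        - cj b₁ * derZb (cj a₁)
      rw [map_neg]; ring
    · refine q10.trans ?_
      change _ = b₁ * derZ a₁ - derZ b₁ * a₁ + derZb (-b₂) * a₂ - -b₂ * derZb a₂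
      rw [map_neg]; ring
    · refine q11.trans ?_
      change _ = b₁ * derZ (-cj a₂) - derZ b₁ * -cj a₂ + derZb (-b₂) * cj a₁
        - -b₂ * derZb (cj a₁)
      rw [map_neg, map_neg]; ring
  -- The entries of `K` are pairings.
  have hG : Gam⁻¹ = !![0, -1; 1, 0] := by
    simp [Gam, Matrix.inv_def, Matrix.adjugate_fin_two, Matrix.det_fin_two]
  have hpair : ∀ (r c : Fin 2 → Smooth) (p : ℂ × ℝ), (pairing T r c).1 p =
      (r 0).1 p * ((S p)⁻¹ 0 0 * (c 0).1 p + (S p)⁻¹ 0 1 * (c 1).1 p)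
      + (r 1).1 p * ((S p)⁻¹ 1 0 * (c 0).1 p + (S p)⁻¹ 1 1 * (c 1).1 p) := by
    intro r c p
    simp only [pairing, Matrix.mulVec, dotProduct, Fin.sum_univ_two]
    rfl
  have hK : ∀ p, Kmat a₁ a₂ b₁ b₂ S p =
      !![(pairing T r₁ c₁).1 p, (pairing T r₁ c₂).1 p;
         (pairing T r₂ c₁).1 p, (pairing T r₂ c₂).1 p] := by
    intro p
    simp only [hpair, Kmat, hG, spinMat]
    ext i j
    simp only [Gam, Matrix.mul_apply, Fin.sum_univ_two, Matrix.transpose_apply]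
    fin_cases i <;> fin_cases j <;>
    · simp [r₁, r₂, c₁, c₂, cj]
      ring
  have cj22 : cj (pairing T r₂ c₂) = pairing T r₁ c₁ := by
    ext p
    have h := (Kmat_quaternion a₁ a₂ b₁ b₂ S p (hquat p)).1
    rw [hK] at h
    exact h
  have cj12 : cj (pairing T r₁ c₂) = -pairing T r₂ c₁ := by
    ext p
    have h := (Kmat_quaternion a₁ a₂ b₁ b₂ S p (hquat p)).2
    rw [hK] at h
    exact h
  have hJz : derZ JJ = 0 := Derivation.map_algebraMap _ _
  have hJb : derZb JJ = 0 := Derivation.map_algebraMap _ _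
  have hJt : derT JJ = 0 := Derivation.map_algebraMap _ _
  have hb12 := dbar_K12 derZb T σ hT JJ u (cj u) r₁ r₂ c₁ c₂ hσb hr₁b hc₂b
  have ht22 := dt_K22 derZ derZb derT T σ hT JJ u v (cj v) JJ_mul_JJ hJz hJb r₁ r₂ c₁ c₂
    hσz hσb hσt hr₂z hc₂b hr₂t hc₂t
  simp only [hK, Matrix.of_apply, Matrix.cons_val_zero, Matrix.cons_val_one]
  generalize pairing T r₁ c₁ = k₁₁ at *
  generalize pairing T r₁ c₂ = k₁₂ at *
  generalize pairing T r₂ c₁ = k₂₁ at *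
  generalize pairing T r₂ c₂ = k₂₂ at *
  have h2b : derZb (2 : Smooth) = 0 := by
    simpa using Derivation.map_natCast derZb 2
  have cj2 : cj (2 : Smooth) = 2 := by
    ext p; exact Complex.conj_ofNat 2
  have fin1 : derT (u + JJ * k₂₂) = JJ * (derZ (derZ (u + JJ * k₂₂))
      + derZb (derZb (u + JJ * k₂₂))
      + ((v + 2 * JJ * derZ k₁₂) + cj (v + 2 * JJ * derZ k₁₂)) * (u + JJ * k₂₂)) := by
    have hcj : cj (derZ k₁₂) = -derZb k₂₁ := by rw [← derZb_cj, cj12, map_neg]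
    simp only [map_add, Derivation.leibniz, hJz, hJb, hJt, smul_eq_mul, mul_zero, add_zero,
      cj_add, cj_mul, cj_JJ, cj2, hcj, eu, ht22]
    linear_combination (-(2 * JJ ^ 2 * u * (derZ k₁₂ + derZb k₂₁))) * JJ_mul_JJ
  have fin2 : derZb (v + 2 * JJ * derZ k₁₂) =
      2 * derZ ((u + JJ * k₂₂) * cj (u + JJ * k₂₂)) := by
    have hx : derZb (derZ k₁₂) = derZ (derZb k₁₂) := derZ_derZb_comm _
    have hy : JJ * derZ (derZb k₁₂) = derZ (JJ * derZb k₁₂) := by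
      simp [Derivation.leibniz, hJz]
    -- `∂_z̄ K₁₂` is exactly the increment `|U + W|² - |U|²`, up to the factor `i`.
    have hz : u * cj u + JJ * derZb k₁₂ = (u + JJ * k₂₂) * cj (u + JJ * k₂₂) := by
      rw [hb12, cj_add, cj_mul, cj_JJ, cj22]
      ring
    rw [← hz, map_add, map_add, ev, ← hy, ← hx]
    simp only [Derivation.leibniz, hJb, h2b, smul_eq_mul]
    ring
  exact ⟨fun p => congrFun (congrArg Subtype.val fin1) p,
    fun p => congrFun (congrArg Subtype.val fin2) p⟩
end
end

section
/- Let f : ℂ×ℝ → ℂ be smooth, holomorphic in z (i.e. f_z̄ = 0) and satisfy f_t = i·f_zz. Set D = |z|² + |f|², U = i(z·f_z − f)/D, a = −i(z̄ + f_z·f̄)/D and V = 2i·a_z. Then at every point (z,t) where D(z,t) ≠ 0 the pair (U,V) satisfies the DSII equation: U_t = i(U_zz + U_z̄z̄ + (V + V̄)U) and V_z̄ = 2(|U|²)_z. -/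
/-! Writing subscripts for derivatives, `D_z = z̄ + f_z f̄`, so `a = -i (log D)_z` and `V = 2 (log D)_zz`.
With `N = z f_z - f`, Lagrange's identity `(|z|² + |f|²)(1 + |f_z|²) - |z̄ + f_z f̄|² = |N|²` says
`(log D)_{z z̄} = |N|² / D² = |U|²`; the second equation is its `z`-derivative, doubled.

In the first equation the terms of `U_zz + U_z̄z̄` that are quadratic in `D_z`, `D_z̄` cancel against
`(V + V̄) U`. What is left, after `f_t = i f_zz` and `f_zt = i f_zzz` are inserted, is
`2 f_zz (z D_z - D - N f̄) = 0`, which holds identically.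

The derivatives are organised through the predicate `HasWirt`, which records the triple
`(g_z, g_z̄, g_t)` at a point and obeys the usual sum, product, quotient and conjugation rules.
Symmetry of second derivatives (`fderiv_apply_comm`) gives that `f_z`, `f_zz` are again holomorphic
in `z` and that `f_zt = i f_zzz`.
-/

open Complex ComplexConjugate

noncomputable section

/-! ### Wirtinger calculus -/

/-- `g` is real-differentiable at `p` with `g_z = A`, `g_z̄ = B`, `g_t = C` there. -/
structure HasWirt (g : ℂ × ℝ → ℂ) (p : ℂ × ℝ) (A B C : ℂ) : Prop where
  diff : DifferentiableAt ℝ g p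
  z : dz g p = A
  zb : dzb g p = B
  t : dt g p = C

namespace HasWirt

variable {g h : ℂ × ℝ → ℂ} {p : ℂ × ℝ} {A B C A₁ B₁ C₁ : ℂ}

theorem of_diff (hg : DifferentiableAt ℝ g p) : HasWirt g p (dz g p) (dzb g p) (dt g p) :=
  ⟨hg, rfl, rfl, rfl⟩

theorem const (c : ℂ) : HasWirt (fun _ => c) p 0 0 0 := by
  constructor <;> simp [dz, dzb, dt]

theorem fst : HasWirt (fun q => q.1) p 1 0 0 := by
  have h : fderiv ℝ (fun q : ℂ × ℝ => q.1) p = ContinuousLinearMap.fst ℝ ℂ ℝ :=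
    hasFDerivAt_fst.fderiv
  refine ⟨differentiableAt_fst, ?_, ?_, ?_⟩
  · simp only [dz, h, ContinuousLinearMap.coe_fst', Complex.I_mul_I]; norm_num
  · simp only [dzb, h, ContinuousLinearMap.coe_fst', Complex.I_mul_I]; norm_num
  · simp [dt, h]

theorem add (hg : HasWirt g p A B C) (hh : HasWirt h p A₁ B₁ C₁) :
    HasWirt (fun q => g q + h q) p (A + A₁) (B + B₁) (C + C₁) := by
  refine ⟨hg.diff.fun_add hh.diff, ?_, ?_, ?_⟩
  · rw [← hg.z, ← hh.z]; simp only [dz, fderiv_fun_add hg.diff hh.diff, add_apply]; ring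
  · rw [← hg.zb, ← hh.zb]; simp only [dzb, fderiv_fun_add hg.diff hh.diff, add_apply]; ring
  · rw [← hg.t, ← hh.t]; simp only [dt, fderiv_fun_add hg.diff hh.diff, add_apply]

theorem mul (hg : HasWirt g p A B C) (hh : HasWirt h p A₁ B₁ C₁) :
    HasWirt (fun q => g q * h q) p (A * h p + g p * A₁) (B * h p + g p * B₁)
      (C * h p + g p * C₁) := by
  have e := fderiv_fun_mul hg.diff hh.diff
  refine ⟨hg.diff.fun_mul hh.diff, ?_, ?_, ?_⟩
  · rw [← hg.z, ← hh.z]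
    simp only [dz, e, add_apply, smul_apply, smul_eq_mul]; ring
  · rw [← hg.zb, ← hh.zb]
    simp only [dzb, e, add_apply, smul_apply, smul_eq_mul]; ring
  · rw [← hg.t, ← hh.t]
    simp only [dt, e, add_apply, smul_apply, smul_eq_mul]; ring

theorem sub (hg : HasWirt g p A B C) (hh : HasWirt h p A₁ B₁ C₁) :
    HasWirt (fun q => g q - h q) p (A - A₁) (B - B₁) (C - C₁) := by
  have := hg.add ((const (-1)).mul hh)
  convert this using 1
  · ext q; ring
  all_goals ring

theorem inv (hg : HasWirt g p A B C) (h0 : g p ≠ 0) :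
    HasWirt (fun q => (g q)⁻¹) p (-A / g p ^ 2) (-B / g p ^ 2) (-C / g p ^ 2) := by
  have e : HasFDerivAt (fun q => (g q)⁻¹) _ p :=
    ((hasDerivAt_inv h0).hasFDerivAt.restrictScalars ℝ).comp p hg.diff.hasFDerivAt
  refine ⟨e.differentiableAt, ?_, ?_, ?_⟩
  · rw [← hg.z]; simp [dz, e.fderiv]; ring
  · rw [← hg.zb]; simp [dzb, e.fderiv]; ring
  · rw [← hg.t]; simp [dt, e.fderiv]; ring

theorem div (hg : HasWirt g p A B C) (hh : HasWirt h p A₁ B₁ C₁) (h0 : h p ≠ 0) :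
    HasWirt (fun q => g q / h q) p ((A * h p - g p * A₁) / h p ^ 2)
      ((B * h p - g p * B₁) / h p ^ 2) ((C * h p - g p * C₁) / h p ^ 2) := by
  convert hg.mul (hh.inv h0) using 1
  all_goals field_simp
  all_goals ring

/-- Conjugation swaps the two Wirtinger derivatives. -/
theorem star (hg : HasWirt g p A B C) :
    HasWirt (fun q => conj (g q)) p (conj B) (conj A) (conj C) := by
  have e : HasFDerivAt (fun q => (starRingEnd ℂ) (g q)) _ p :=
    (Complex.conjCLE.toContinuousLinearMap.hasFDerivAt (x := g p)).comp p hg.diff.hasFDerivAt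
  refine ⟨e.differentiableAt, ?_, ?_, ?_⟩
  · rw [← hg.zb]; simp [dz, dzb, e.fderiv, map_ofNat]; try ring
  · rw [← hg.z]; simp [dz, dzb, e.fderiv, map_ofNat]; try ring
  · rw [← hg.t]; simp [dt, e.fderiv]

theorem congr (hg : HasWirt g p A B C) (e : h =ᶠ[nhds p] g) : HasWirt h p A B C := by
  have he := e.fderiv_eq (𝕜 := ℝ)
  refine ⟨hg.diff.congr_of_eventuallyEq e, ?_, ?_, ?_⟩
  · rw [← hg.z, dz, dz, he]
  · rw [← hg.zb, dzb, dzb, he]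
  · rw [← hg.t, dt, dt, he]

end HasWirt

/-! ### Commuting derivatives -/

section Smooth

variable {g : ℂ × ℝ → ℂ}

theorem contDiff_fderiv_apply (hg : ContDiff ℝ (⊤ : ℕ∞) g) (v : ℂ × ℝ) :
    ContDiff ℝ (⊤ : ℕ∞) (fun q => fderiv ℝ g q v) :=
  (hg.fderiv_right (m := (⊤ : ℕ∞)) (by simp)).clm_apply contDiff_const

theorem contDiff_dz (hg : ContDiff ℝ (⊤ : ℕ∞) g) : ContDiff ℝ (⊤ : ℕ∞) (dz g) :=
  contDiff_const.mul ((contDiff_fderiv_apply hg _).sub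
    (contDiff_const.mul (contDiff_fderiv_apply hg _)))

theorem differentiable_of_smooth (hg : ContDiff ℝ (⊤ : ℕ∞) g) : Differentiable ℝ g :=
  hg.differentiable (by simp)

/-- Symmetry of the second derivative, as commuting directional derivatives. -/
theorem fderiv_apply_comm (hg : ContDiff ℝ (⊤ : ℕ∞) g) (p v w : ℂ × ℝ) :
    fderiv ℝ (fun q => fderiv ℝ g q v) p w = fderiv ℝ (fun q => fderiv ℝ g q w) p v := by
  have hd : DifferentiableAt ℝ (fderiv ℝ g) p :=
    (hg.fderiv_right (m := (⊤ : ℕ∞)) (by simp)).differentiable (by simp) p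
  have e : ∀ u w : ℂ × ℝ, fderiv ℝ (fun q => fderiv ℝ g q u) p w
      = fderiv ℝ (fderiv ℝ g) p w u := by
    intro u w
    rw [fderiv_clm_apply hd (differentiableAt_const u)]
    simp
  rw [e, e]
  exact (hg.contDiffAt.isSymmSndFDerivAt (by simpa using WithTop.coe_le_coe.2 (le_top : (2 : ℕ∞) ≤ ⊤))) w v

/-- Directional derivatives commute with `∂_z`. -/
theorem fderiv_dz (hg : ContDiff ℝ (⊤ : ℕ∞) g) (p w : ℂ × ℝ) :
    fderiv ℝ (dz g) p w = dz (fun q => fderiv ℝ g q w) p := by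
  have d := fun v => (differentiable_of_smooth (contDiff_fderiv_apply hg v)) p
  have e : fderiv ℝ (dz g) p w = (2 : ℂ)⁻¹ * (fderiv ℝ (fun q => fderiv ℝ g q (1, 0)) p w
      - Complex.I * fderiv ℝ (fun q => fderiv ℝ g q (Complex.I, 0)) p w) := by
    change fderiv ℝ (fun q => (2 : ℂ)⁻¹ * (fderiv ℝ g q (1, 0)
      - Complex.I * fderiv ℝ g q (Complex.I, 0))) p w = _
    rw [fderiv_const_mul ((d _).fun_sub ((d _).const_mul _)),
      fderiv_fun_sub (d _) ((d _).const_mul _), fderiv_const_mul (d _)]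
    simp
  rw [e, fderiv_apply_comm hg p (1, 0) w, fderiv_apply_comm hg p (Complex.I, 0) w]
  rfl

theorem dt_dz (hg : ContDiff ℝ (⊤ : ℕ∞) g) (p : ℂ × ℝ) : dt (dz g) p = dz (dt g) p :=
  fderiv_dz hg p _

theorem dzb_dz (hg : ContDiff ℝ (⊤ : ℕ∞) g) (p : ℂ × ℝ) : dzb (dz g) p = dz (dzb g) p := by
  have d := fun v => HasWirt.of_diff ((differentiable_of_smooth (contDiff_fderiv_apply hg v)) p)
  have e := ((HasWirt.const (2 : ℂ)⁻¹).mul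
    ((d (1, 0)).add ((HasWirt.const Complex.I).mul (d (Complex.I, 0))))).z
  change dz (dzb g) p = _ at e
  rw [e, dzb, fderiv_dz hg, fderiv_dz hg]
  ring

/-- The `z`-derivative of a smooth function holomorphic in `z` is holomorphic in `z`. -/
theorem dzb_dz_eq_zero (hg : ContDiff ℝ (⊤ : ℕ∞) g) (h : ∀ p, dzb g p = 0) (p : ℂ × ℝ) :
    dzb (dz g) p = 0 := by
  rw [dzb_dz hg, show dzb g = fun _ => 0 from funext h]
  exact (HasWirt.const 0).z

end Smooth

/-! ### The DSII equation -/

theorem dsii_from_holomorphic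
    (f : ℂ × ℝ → ℂ) (hf : ContDiff ℝ (⊤ : ℕ∞) f)
    (hhol : ∀ p, dzb f p = 0)
    (hevol : ∀ p, dt f p = Complex.I * dz (dz f) p)
    (D U a V : ℂ × ℝ → ℂ)
    (hD : ∀ p, D p = (Complex.normSq p.1 : ℂ) + (Complex.normSq (f p) : ℂ))
    (hUdef : ∀ p, U p = Complex.I * (p.1 * dz f p - f p) / D p)
    (hadef : ∀ p, a p = -Complex.I * (conj p.1 + dz f p * conj (f p)) / D p)
    (hVdef : ∀ p, V p = 2 * Complex.I * dz a p) :
    ∀ p : ℂ × ℝ, D p ≠ 0 →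
      (dt U p = Complex.I * (dz (dz U) p + dzb (dzb U) p + (V p + conj (V p)) * U p) ∧
       dzb V p = 2 * dz (fun q => U q * conj (U q)) p) := by
  obtain rfl : D = fun p => p.1 * conj p.1 + f p * conj (f p) := by
    funext p; rw [hD, Complex.mul_conj, Complex.mul_conj]
  obtain rfl : U = _ := funext hUdef
  obtain rfl : a = _ := funext hadef
  obtain rfl : V = _ := funext hVdef
  clear hD hUdef hadef hVdef
  have s1 := contDiff_dz hf
  have s2 := contDiff_dz s1
  have b1 := dzb_dz_eq_zero hf hhol
  have b2 := dzb_dz_eq_zero s1 b1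
  have t1 : ∀ p, dt (dz f) p = Complex.I * dz (dz (dz f)) p := by
    intro p
    rw [dt_dz hf, show dt f = fun q => Complex.I * dz (dz f) q from funext hevol]
    simpa using ((HasWirt.const Complex.I).mul
      (HasWirt.of_diff (differentiable_of_smooth s2 p))).z
  have w0 : ∀ p, HasWirt f p (dz f p) 0 (Complex.I * dz (dz f) p) := fun p =>
    ⟨differentiable_of_smooth hf p, rfl, hhol p, hevol p⟩
  have w1 : ∀ p, HasWirt (dz f) p (dz (dz f) p) 0 (Complex.I * dz (dz (dz f)) p) := fun p =>
    ⟨differentiable_of_smooth s1 p, rfl, b1 p, t1 p⟩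
  have w2 : ∀ p, HasWirt (dz (dz f)) p (dz (dz (dz f)) p) 0 (dt (dz (dz f)) p) := fun p =>
    ⟨differentiable_of_smooth s2 p, rfl, b2 p, rfl⟩
  have cz : ∀ p, HasWirt (fun q : ℂ × ℝ => conj q.1) p 0 1 0 := fun p => by
    simpa using (HasWirt.fst (p := p)).star
  generalize dz (dz (dz f)) = f3 at *
  generalize dz (dz f) = f2 at *
  generalize dz f = f1 at *
  clear hhol hevol s1 s2 b1 b2 t1
  set D : ℂ × ℝ → ℂ := fun p => p.1 * conj p.1 + f p * conj (f p) with hDdef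
  set N : ℂ × ℝ → ℂ := fun p => p.1 * f1 p - f p with hN
  -- `E` is `D_z`, and its conjugate is `D_z̄`.
  set E : ℂ × ℝ → ℂ := fun p => conj p.1 + f1 p * conj (f p) with hE
  have wD : ∀ p, HasWirt D p (E p) (conj (E p))
      (Complex.I * (f2 p * conj (f p) - f p * conj (f2 p))) := by
    intro p
    convert (HasWirt.fst.mul (cz p)).add ((w0 p).mul (w0 p).star) using 1
    all_goals simp [hE]
    all_goals ring
  have wN : ∀ p, HasWirt N p (p.1 * f2 p) 0 (Complex.I * (p.1 * f3 p - f2 p)) := by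
    intro p
    convert (HasWirt.fst.mul (w1 p)).sub (w0 p) using 1
    all_goals simp
    ring
  have wE : ∀ p, HasWirt E p (f2 p * conj (f p)) (1 + f1 p * conj (f1 p))
      (Complex.I * (f3 p * conj (f p) - f1 p * conj (f2 p))) := by
    intro p
    convert (cz p).add ((w1 p).mul (w0 p).star) using 1
    all_goals simp
    ring
  have cD : ∀ p, conj (D p) = D p := by intro p; simp [hDdef]; ring
  -- Lagrange's identity, in the form `D D_{z z̄} - D_z D_z̄ = |N|²`.
  have key : ∀ p, D p * (1 + f1 p * conj (f1 p)) - E p * conj (E p) = N p * conj (N p) := by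
    intro p; simp [hDdef, hE, hN]; ring
  have contD : Continuous D := continuous_iff_continuousAt.2 fun p => (wD p).diff.continuousAt
  have wU : ∀ p, D p ≠ 0 → HasWirt (fun q => Complex.I * N q / D q) p
      (Complex.I * (p.1 * f2 p * D p - N p * E p) / D p ^ 2)
      (-Complex.I * (N p * conj (E p)) / D p ^ 2)
      (-((p.1 * f3 p - f2 p) * D p - N p * (f2 p * conj (f p) - f p * conj (f2 p)))
        / D p ^ 2) := by
    intro p hp
    convert ((HasWirt.const Complex.I).mul (wN p)).div (wD p) hp using 1
    · ring
    · ring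
    · congr 1
      linear_combination (-((p.1 * f3 p - f2 p) * D p
        - N p * (f2 p * conj (f p) - f p * conj (f2 p)))) * Complex.I_mul_I
  have wa : ∀ p, D p ≠ 0 → dz (fun q => -Complex.I * E q / D q) p =
      -Complex.I * (f2 p * conj (f p) * D p - E p * E p) / D p ^ 2 := by
    intro p hp
    rw [(((HasWirt.const (-Complex.I)).mul (wE p)).div (wD p) hp).z]
    ring
  intro p hp
  have ev : ∀ᶠ q in nhds p, D q ≠ 0 := contD.continuousAt.eventually_ne hp
  have wD2 := (wD p).mul (wD p)
  have hp2 : D p * D p ≠ 0 := mul_ne_zero hp hp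
  -- Second derivatives at `p`, from the first-order formulas valid on the open set `D ≠ 0`.
  have hUzz := ((((HasWirt.const Complex.I).mul (((HasWirt.fst.mul (w2 p)).mul (wD p)).sub
    ((wN p).mul (wE p)))).div wD2 hp2).congr
    (h := dz (fun q => Complex.I * N q / D q))
    (ev.mono fun q hq => by rw [(wU q hq).z, sq])).z
  have hUbb := ((((HasWirt.const (-Complex.I)).mul ((wN p).mul (wE p).star)).div wD2 hp2).congr
    (h := dzb (fun q => Complex.I * N q / D q))
    (ev.mono fun q hq => by rw [(wU q hq).zb, sq])).zb
  have hVb := ((((HasWirt.const (2 * Complex.I)).mul (((HasWirt.const (-Complex.I)).mul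
    ((((w2 p).mul (w0 p).star).mul (wD p)).sub ((wE p).mul (wE p)))).div wD2 hp2)).congr
    (h := fun q => 2 * Complex.I * dz (fun q => -Complex.I * E q / D q) q)
    (ev.mono fun q hq => by simp only [wa q hq, sq]))).zb
  have hUU := ((wU p hp).mul (wU p hp).star).z
  change dt (fun q => Complex.I * N q / D q) p
      = Complex.I * (dz (dz (fun q => Complex.I * N q / D q)) p
        + dzb (dzb (fun q => Complex.I * N q / D q)) p
        + (2 * Complex.I * dz (fun q => -Complex.I * E q / D q) p
          + conj (2 * Complex.I * dz (fun q => -Complex.I * E q / D q) p))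
          * (Complex.I * N p / D p)) ∧
    dzb (fun q => 2 * Complex.I * dz (fun q => -Complex.I * E q / D q) q) p
      = 2 * dz (fun q => (Complex.I * N q / D q) * conj (Complex.I * N q / D q)) p
  rw [hUzz, hUbb, hVb, hUU, wa p hp, (wU p hp).t]
  -- `r1` is the identity left over in the first equation, `key p` and `r2` those in the second.
  have r1 : p.1 * E p - D p - N p * conj (f p) = 0 := by simp [hDdef, hE, hN]; ring
  have r2 : conj (f1 p) * D p - conj (f p) * conj (E p) = p.1 * conj (N p) := by
    simp [hDdef, hE, hN]; ring
  have k := key p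
  simp only [map_mul, map_sub, map_div₀, map_pow, map_neg, map_ofNat, Complex.conj_I,
    Complex.conj_conj, cD]
  clear_value D N E
  generalize D p = d at *
  generalize conj (E p) = eb at *
  generalize E p = e at *
  generalize conj (N p) = nb at *
  generalize N p = n at *
  have i2 : Complex.I ^ 2 = -1 := Complex.I_sq
  have i4 : Complex.I ^ 4 = 1 := Complex.I_pow_four
  constructor
  · field_simp
    ring_nf
    simp only [i2, i4]
    linear_combination (-2 * f2 p * d) * r1
  · field_simp
    linear_combination (-2 * Complex.I * f2 p * d) * r2 + 4 * Complex.I * e * k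
end
end

section
/- Fix c ∈ ℂ and set f(z,t) = z⁴ + 12itz² − 12t² + c, D = |z|² + |f|², U = i(3z⁴ + 12itz² + 12t² − c)/D, a = −i(z̄ + (4z³ + 24itz)·conj(f))/D and V = 2i·a_z. Then at every point (z,t) with D(z,t) ≠ 0 the pair (U,V) satisfies the DSII equation. -/
/-!
Write `N = z f_z - f`, so that `U = i N / D`. Here `f` is holomorphic in `z` and `f_t = i f_zz`, and
`a = -i D_z / D`, whence `V = 2 (log D)_zz = 2 (D_zz / D - D_z ^ 2 / D ^ 2)`.

The second equation holds because `(log D)_{z z̄} = |N|² / D² = |U|²`: this is the Lagrange identity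
for the vectors `(z, f)` and `(1, f_z)`. In the first equation the terms of order `D⁻³` cancel
between `U_zz` and `V U` (and between `U_z̄z̄` and `conj V · U`); after inserting `f_t = i f_zz` what
is left is `2 f_zz` times the identity `D + N conj f = z D_z`.

`HasW` records all three derivatives of a function at a point and `HasW.mul`, `HasW.inv`, `HasW.star`
are the rules of calculus for them, so that both equations become rational identities
in `z`, `f`, `f_z`, `f_zz`, `f_zzz`, their conjugates, and `D⁻¹`.
-/

open Complex ComplexConjugate

noncomputable section

/-- The pair (U,V) satisfies the DSII equation at the point p. -/
def DSIIAt (U V : ℂ × ℝ → ℂ) (p : ℂ × ℝ) : Prop :=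
  dt U p = Complex.I *
      (dz (dz U) p + dzb (dzb U) p + (V p + conj (V p)) * U p) ∧
  dzb V p = 2 * dz (fun q => U q * conj (U q)) p

/-- The real-linear map `(ζ, s) ↦ u ζ + v ζ̄ + w s`. -/
def wirtingerMap (u v w : ℂ) : ℂ × ℝ →L[ℝ] ℂ :=
  u • ContinuousLinearMap.fst ℝ ℂ ℝ
    + v • ((conjCLE : ℂ →L[ℝ] ℂ).comp (ContinuousLinearMap.fst ℝ ℂ ℝ))
    + w • (ofRealCLM.comp (ContinuousLinearMap.snd ℝ ℂ ℝ))

lemma wirtingerMap_apply (u v w : ℂ) (x : ℂ × ℝ) :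
    wirtingerMap u v w x = u * x.1 + v * conj x.1 + w * (x.2 : ℂ) := by
  simp [wirtingerMap]

/-- `g` is differentiable at `p` with `g_z = u`, `g_z̄ = v` and `g_t = w` there. -/
def HasW (g : ℂ × ℝ → ℂ) (p : ℂ × ℝ) (u v w : ℂ) : Prop :=
  HasFDerivAt g (wirtingerMap u v w) p

namespace HasW

variable {g h : ℂ × ℝ → ℂ} {p : ℂ × ℝ} {u v w u' v' w' : ℂ}

lemma dz_eq (H : HasW g p u v w) : dz g p = u := by
  have H' : fderiv ℝ g p = _ := HasFDerivAt.fderiv H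
  simp only [dz, H', wirtingerMap_apply]
  simp
  linear_combination (-(u - v) / 2) * I_mul_I

lemma dzb_eq (H : HasW g p u v w) : dzb g p = v := by
  have H' : fderiv ℝ g p = _ := HasFDerivAt.fderiv H
  simp only [dzb, H', wirtingerMap_apply]
  simp
  linear_combination ((u - v) / 2) * I_mul_I

lemma dt_eq (H : HasW g p u v w) : dt g p = w := by
  have H' : fderiv ℝ g p = _ := HasFDerivAt.fderiv H
  simp [dt, H', wirtingerMap_apply]

lemma congr (H : HasW g p u v w) (hu : u = u') (hv : v = v') (hw : w = w') :
    HasW g p u' v' w' := by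
  subst hu hv hw; exact H

lemma const (k : ℂ) : HasW (fun _ => k) p 0 0 0 := by
  refine HasFDerivAt.congr_fderiv (hasFDerivAt_const k p) ?_
  ext x <;> simp [wirtingerMap_apply]

lemma zvar : HasW (fun q => q.1) p 1 0 0 := by
  refine HasFDerivAt.congr_fderiv hasFDerivAt_fst ?_
  ext x <;> simp [wirtingerMap_apply]

lemma tvar : HasW (fun q => (q.2 : ℂ)) p 0 0 1 := by
  refine HasFDerivAt.congr_fderiv
    (ofRealCLM.hasFDerivAt.comp p (hasFDerivAt_snd (𝕜 := ℝ) (p := p))) ?_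
  ext x <;> simp [wirtingerMap_apply]

lemma add (H : HasW g p u v w) (K : HasW h p u' v' w') :
    HasW (fun q => g q + h q) p (u + u') (v + v') (w + w') := by
  refine HasFDerivAt.congr_fderiv (HasFDerivAt.add H K) ?_
  refine ContinuousLinearMap.ext fun x => ?_
  simp only [add_apply, wirtingerMap_apply]; ring

lemma mul (H : HasW g p u v w) (K : HasW h p u' v' w') :
    HasW (fun q => g q * h q) p
      (u * h p + g p * u') (v * h p + g p * v') (w * h p + g p * w') := by
  refine HasFDerivAt.congr_fderiv (HasFDerivAt.mul H K) ?_
  refine ContinuousLinearMap.ext fun x => ?_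
  simp only [add_apply, smul_apply, smul_eq_mul,
    wirtingerMap_apply]; ring

lemma sub (H : HasW g p u v w) (K : HasW h p u' v' w') :
    HasW (fun q => g q - h q) p (u - u') (v - v') (w - w') := by
  refine HasFDerivAt.congr_fderiv (HasFDerivAt.sub H K) ?_
  refine ContinuousLinearMap.ext fun x => ?_
  simp only [sub_apply, wirtingerMap_apply]; ring

lemma inv (H : HasW g p u v w) (h0 : g p ≠ 0) :
    HasW (fun q => (g q)⁻¹) p
      (-u * (g p)⁻¹ ^ 2) (-v * (g p)⁻¹ ^ 2) (-w * (g p)⁻¹ ^ 2) := by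
  refine HasFDerivAt.congr_fderiv (((hasDerivAt_inv h0).hasFDerivAt.restrictScalars ℝ).comp p H) ?_
  refine ContinuousLinearMap.ext fun x => ?_
  simp [wirtingerMap_apply]; ring

/-- Conjugation exchanges the two Wirtinger derivatives. -/
lemma star (H : HasW g p u v w) :
    HasW (fun q => conj (g q)) p (conj v) (conj u) (conj w) := by
  refine HasFDerivAt.congr_fderiv
    ((conjCLE : ℂ →L[ℝ] ℂ).hasFDerivAt.comp p H) ?_
  refine ContinuousLinearMap.ext fun x => ?_
  simp [wirtingerMap_apply]; ring

lemma congr_fun (H : HasW g p u v w) (hgh : h =ᶠ[nhds p] g) : HasW h p u v w :=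
  HasFDerivAt.congr_of_eventuallyEq H hgh

end HasW

/-- The solution from f = z⁴ + 12itz² − 12t² + c (case n = 3). -/
theorem solution_n3
    (c : ℂ)
    (f D U a V : ℂ × ℝ → ℂ)
    (hf : ∀ p, f p = p.1 ^ 4 + 12 * Complex.I * (p.2 : ℂ) * p.1 ^ 2
      - 12 * (p.2 : ℂ) ^ 2 + c)
    (hD : ∀ p, D p = (Complex.normSq p.1 : ℂ) + (Complex.normSq (f p) : ℂ))
    (hUdef : ∀ p, U p = Complex.I * (3 * p.1 ^ 4 + 12 * Complex.I * (p.2 : ℂ) * p.1 ^ 2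
      + 12 * (p.2 : ℂ) ^ 2 - c) / D p)
    (hadef : ∀ p, a p =
      -Complex.I * (conj p.1
        + (4 * p.1 ^ 3 + 24 * Complex.I * (p.2 : ℂ) * p.1) * conj (f p)) / D p)
    (hVdef : ∀ p, V p = 2 * Complex.I * dz a p) :
    ∀ p : ℂ × ℝ, D p ≠ 0 → DSIIAt U V p := by
  intro p hp
  -- `f1`, `f2`, `f3` are the successive `z`-derivatives of `f`.
  obtain ⟨f1, hf1⟩ : ∃ f1 : ℂ × ℝ → ℂ, ∀ q, f1 q = 4 * q.1 ^ 3 + 24 * I * (q.2 : ℂ) * q.1 :=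
    ⟨_, fun _ => rfl⟩
  obtain ⟨f2, hf2⟩ : ∃ f2 : ℂ × ℝ → ℂ, ∀ q, f2 q = 12 * q.1 ^ 2 + 24 * I * (q.2 : ℂ) :=
    ⟨_, fun _ => rfl⟩
  obtain ⟨f3, hf3⟩ : ∃ f3 : ℂ × ℝ → ℂ, ∀ q, f3 q = 24 * q.1 := ⟨_, fun _ => rfl⟩
  have Wz : ∀ q, HasW (fun q => q.1) q 1 0 0 := fun q => HasW.zvar
  have Wzb : ∀ q, HasW (fun q => conj q.1) q 0 1 0 := fun q =>
    (HasW.zvar.star).congr (by simp) (by simp) (by simp)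
  have Wt : ∀ q, HasW (fun q => (q.2 : ℂ)) q 0 0 1 := fun q => HasW.tvar
  have Wf : ∀ q, HasW f q (f1 q) 0 (I * f2 q) := by
    intro q
    refine (((((Wz q).mul (Wz q)).mul ((Wz q).mul (Wz q))).add
      (((HasW.const (12 * I)).mul (Wt q)).mul ((Wz q).mul (Wz q)))).sub
      ((HasW.const 12).mul ((Wt q).mul (Wt q))) |>.add (HasW.const c)).congr_fun
      (Filter.Eventually.of_forall fun r => ?_) |>.congr ?_ ?_ ?_
    · rw [hf]; ring
    · rw [hf1]; ring
    · ring
    · rw [hf2]; linear_combination (-24 * (q.2 : ℂ)) * I_mul_I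
  have Wf1 : ∀ q, HasW f1 q (f2 q) 0 (I * f3 q) := by
    intro q
    refine (((HasW.const 4).mul ((Wz q).mul ((Wz q).mul (Wz q)))).add
      (((HasW.const (24 * I)).mul (Wt q)).mul (Wz q))).congr_fun
      (Filter.Eventually.of_forall fun r => ?_) |>.congr ?_ ?_ ?_
    · rw [hf1]; ring
    · rw [hf2]; ring
    · ring
    · rw [hf3]; ring
  have Wf2 : ∀ q, HasW f2 q (f3 q) 0 (24 * I) := by
    intro q
    refine (((HasW.const 12).mul ((Wz q).mul (Wz q))).add
      ((HasW.const (24 * I)).mul (Wt q))).congr_fun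
      (Filter.Eventually.of_forall fun r => ?_) |>.congr ?_ ?_ ?_
    · rw [hf2]; ring
    · rw [hf3]; ring
    · ring
    · ring
  have hD' : ∀ q, D q = q.1 * conj q.1 + f q * conj (f q) := by
    intro q; rw [hD, mul_conj, mul_conj]
  have cD : ∀ q, conj (D q) = D q := by
    intro q; rw [hD]; simp
  obtain ⟨D1, hD1⟩ : ∃ D1 : ℂ × ℝ → ℂ, ∀ q, D1 q = conj q.1 + f1 q * conj (f q) :=
    ⟨_, fun _ => rfl⟩
  have cD1 : ∀ q, conj (D1 q) = q.1 + conj (f1 q) * f q := by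
    intro q; simp [hD1]
  have WD : ∀ q, HasW D q (D1 q) (conj (D1 q))
      (I * f2 q * conj (f q) - I * f q * conj (f2 q)) := by
    intro q
    refine (((Wz q).mul (Wzb q)).add ((Wf q).mul (Wf q).star)).congr_fun
      (Filter.Eventually.of_forall fun r => ?_) |>.congr ?_ ?_ ?_
    · exact hD' r
    · simp [hD1]
    · simp [cD1]; ring
    · simp; ring
  have WD1 : ∀ q, ∃ w, HasW D1 q (f2 q * conj (f q)) (1 + f1 q * conj (f1 q)) w := by
    intro q
    refine ⟨_, ((Wzb q).add ((Wf1 q).mul (Wf q).star)).congr_fun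
      (Filter.Eventually.of_forall fun r => ?_) |>.congr ?_ ?_ rfl⟩
    · exact hD1 r
    · simp
    · simp
  obtain ⟨N, hN⟩ : ∃ N : ℂ × ℝ → ℂ, ∀ q, N q = q.1 * f1 q - f q := ⟨_, fun _ => rfl⟩
  have WN : ∀ q, HasW N q (q.1 * f2 q) 0 (I * q.1 * f3 q - I * f2 q) := by
    intro q
    refine (((Wz q).mul (Wf1 q)).sub (Wf q)).congr_fun
      (Filter.Eventually.of_forall fun r => ?_) |>.congr ?_ ?_ ?_
    · exact hN r
    · ring
    · ring
    · ring
  have hU : ∀ q, U q = I * N q * (D q)⁻¹ := by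
    intro q; rw [hUdef, hN, hf1, hf]; ring
  have ha : ∀ q, a q = -I * D1 q * (D q)⁻¹ := by
    intro q; rw [hadef, hD1, hf1]; ring
  have near : ∀ᶠ q in nhds p, D q ≠ 0 :=
    (HasFDerivAt.continuousAt (WD p)).eventually_ne hp
  have WU : ∀ q, D q ≠ 0 → HasW U q
      (I * (q.1 * f2 q * (D q)⁻¹ - N q * D1 q * (D q)⁻¹ ^ 2))
      (-I * (N q * conj (D1 q) * (D q)⁻¹ ^ 2))
      (I * ((I * q.1 * f3 q - I * f2 q) * (D q)⁻¹
        - N q * (I * f2 q * conj (f q) - I * f q * conj (f2 q)) * (D q)⁻¹ ^ 2)) := by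
    intro q hq
    refine (((HasW.const I).mul (WN q)).mul ((WD q).inv hq)).congr_fun
      (Filter.Eventually.of_forall fun r => ?_) |>.congr ?_ ?_ ?_
    · exact hU r
    · ring
    · ring
    · ring
  have hV : ∀ q, D q ≠ 0 →
      V q = 2 * (f2 q * conj (f q) * (D q)⁻¹ - D1 q * D1 q * ((D q)⁻¹ * (D q)⁻¹)) := by
    intro q hq
    obtain ⟨w, hw⟩ := WD1 q
    have := (((HasW.const (-I)).mul hw).mul ((WD q).inv hq)).congr_fun
      (Filter.Eventually.of_forall ha)
    rw [hVdef, this.dz_eq]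
    linear_combination (-2 * (f2 q * conj (f q) * (D q)⁻¹ - D1 q * D1 q * (D q)⁻¹ ^ 2)) * I_mul_I
  obtain ⟨w, WD1p⟩ := WD1 p
  have Wi := (WD p).inv hp
  have e1 := ((((HasW.const I).mul ((((Wz p).mul (Wf2 p)).mul Wi).sub
    (((WN p).mul WD1p).mul (Wi.mul Wi)))).congr_fun (h := dz U) (by
      filter_upwards [near] with q hq
      rw [(WU q hq).dz_eq]; ring))).dz_eq
  have e2 := ((((HasW.const (-I)).mul
    (((WN p).mul WD1p.star).mul (Wi.mul Wi))).congr_fun (h := dzb U) (by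
      filter_upwards [near] with q hq
      rw [(WU q hq).dzb_eq]; ring))).dzb_eq
  have e3 := ((((HasW.const 2).mul ((((Wf2 p).mul (Wf p).star).mul Wi).sub
    ((WD1p.mul WD1p).mul (Wi.mul Wi)))).congr_fun (h := V) (by
      filter_upwards [near] with q hq
      rw [hV q hq]))).dzb_eq
  have e4 := ((WU p hp).mul (WU p hp).star).dz_eq
  -- With `k = D⁻¹`, the only relation needed is `k D = 1`, with `D` written out.
  have hk : (D p)⁻¹ * (p.1 * conj p.1 + f p * conj (f p)) = 1 := by
    rw [← hD' p]; exact inv_mul_cancel₀ hp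
  constructor
  · rw [(WU p hp).dt_eq, e1, e2, hV p hp, hU]
    simp only [map_mul, map_sub, map_add, map_inv₀, map_ofNat, conj_conj, cD,
      hD1, hN]
    linear_combination (I ^ 2 * 2 * f2 p * (D p)⁻¹) * hk
  · rw [e3, e4, hU]
    simp only [map_mul, map_sub, map_add, map_inv₀, map_neg, map_pow,
      conj_conj, conj_I, cD, hD1, hN]
    linear_combination
      (2 * (2 * (conj p.1 + f1 p * conj (f p)) * (D p)⁻¹ ^ 2 * (1 + f1 p * conj (f1 p))
        - f2 p * conj (f1 p) * (D p)⁻¹)) * hk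
      + (2 * (p.1 * f2 p * (conj p.1 * conj (f1 p) - conj (f p)) * (D p)⁻¹ ^ 2
        - 2 * (p.1 * f1 p - f p) * (conj p.1 * conj (f1 p) - conj (f p))
          * (conj p.1 + f1 p * conj (f p)) * (D p)⁻¹ ^ 3)) * I_mul_I
end
end
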